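/- arXiv:2511.19494 — 5 statements merged into one kernel-verified Lean document; each statement's English description precedes it below -/
import Mathlib

section
/- For every integer r ≥ 1 and every real 0 < ε < 1, the finite nilpotent group G = (ℤ/2ℤ)^r, which has rank(G) = r, satisfies φ_k(G) < 1 − ε when k = r + ⌈log₂(2/ε)⌉ − 3 (interpreting φ_k(G) with this value of k, which may be computed in ℤ; if k < 0 or the k-tuples never generate, φ_k(G) = 0). -/
/-- `genProb G k` is the probability that `k` independently and uniformly chosen random
elements of the finite group `G` generate `G`, i.e. the number of `k`-tuples whose generated
subgroup is all of `G`, divided by `|G|^k`. -/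
noncomputable def genProb (G : Type*) [Group G] (k : ℕ) : ℝ :=
  (Nat.card {v : Fin k → G // Subgroup.closure (Set.range v) = ⊤} : ℝ) /
    (Nat.card G : ℝ) ^ k

/-- `genProb` extended to integer values of `k`: it is `0` for negative `k`. -/
noncomputable def genProbZ (G : Type*) [Group G] (k : ℤ) : ℝ :=
  if 0 ≤ k then genProb G k.toNat else 0

/-- The rows of a tuple of elements of `(ℤ/2ℤ)^r` that generates the group are linearly
independent over `ZMod 2`. -/
lemma linearIndependent_rows_of_closure_eq_top {r k : ℕ}
    (v : Fin k → Fin r → Multiplicative (ZMod 2))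
    (hv : Subgroup.closure (Set.range v) = ⊤) :
    LinearIndependent (ZMod 2) (fun (i : Fin r) (j : Fin k) => (v j i).toAdd) := by
  rw [Fintype.linearIndependent_iff]
  intro c hc i
  have vanish : ∀ x : Fin r → Multiplicative (ZMod 2), ∑ i, c i * (x i).toAdd = 0 := by
    intro x
    have hx : x ∈ Subgroup.closure (Set.range v) := hv ▸ Subgroup.mem_top x
    induction hx using Subgroup.closure_induction with
    | mem x hx =>
      obtain ⟨j, rfl⟩ := hx
      simpa [Finset.sum_apply] using congrFun hc j
    | one => simp
    | mul x y _ _ hx hy => simp [mul_add, Finset.sum_add_distrib, hx, hy]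
    | inv x _ hx => simpa using hx
  have := vanish (fun j => Multiplicative.ofAdd (if j = i then 1 else 0))
  simpa using this

/-- The number of generating `k`-tuples of `(ℤ/2ℤ)^r` is at most the number of linearly
independent `r`-tuples of vectors of `(ℤ/2ℤ)^k`. -/
lemma card_generating_le_card_linearIndependent (r k : ℕ) :
    Nat.card {v : Fin k → Fin r → Multiplicative (ZMod 2) //
        Subgroup.closure (Set.range v) = ⊤} ≤
      Nat.card {w : Fin r → Fin k → ZMod 2 // LinearIndependent (ZMod 2) w} := by
  refine Nat.card_le_card_of_injective
    (fun v => ⟨fun i j => (v.1 j i).toAdd, linearIndependent_rows_of_closure_eq_top v.1 v.2⟩) ?_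
  intro v w h
  ext j i
  exact congrFun (congrFun (congrArg Subtype.val h) i) j

/-- For `k ≥ r - 1`, random `k`-tuples generate `(ℤ/2ℤ)^r` with probability at most
`1 - 2^(r - 1 - k)`. -/
lemma genProb_le (s d : ℕ) :
    genProb (Fin (s + 1) → Multiplicative (ZMod 2)) (s + d) ≤ 1 - ((2 : ℝ) ^ d)⁻¹ := by
  have hcard := card_generating_le_card_linearIndependent (s + 1) (s + d)
  have hG : Nat.card (Fin (s + 1) → Multiplicative (ZMod 2)) = 2 ^ (s + 1) := by simp
  rw [genProb, hG, div_le_iff₀ (by positivity)]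
  refine (Nat.cast_le.mpr hcard).trans ?_
  rcases Nat.eq_zero_or_pos d with rfl | hd
  · have : IsEmpty {w : Fin (s + 1) → Fin (s + 0) → ZMod 2 // LinearIndependent (ZMod 2) w} :=
      ⟨fun w => by simpa using w.2.fintype_card_le_finrank⟩
    simp
  · rw [card_linearIndependent (by simp; omega), Fin.prod_univ_castSucc]
    simp only [ZMod.card, Module.finrank_fin_fun, Fin.val_castSucc, Fin.val_last]
    have hprod : ∏ i : Fin s, (2 ^ (s + d) - 2 ^ (i : ℕ)) ≤ (2 ^ (s + d)) ^ s := by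
      calc _ ≤ ∏ _i : Fin s, 2 ^ (s + d) :=
            Finset.prod_le_prod (fun _ _ => Nat.zero_le _) (fun _ _ => Nat.sub_le _ _)
        _ = _ := by simp
    have hlast : ((2 ^ (s + d) - 2 ^ s : ℕ) : ℝ) = (1 - ((2 : ℝ) ^ d)⁻¹) * 2 ^ (s + d) := by
      rw [Nat.cast_sub (Nat.pow_le_pow_right two_pos (by omega))]
      push_cast
      rw [pow_add]
      field_simp
    have hprod' : ((∏ i : Fin s, (2 ^ (s + d) - 2 ^ (i : ℕ)) : ℕ) : ℝ) ≤ (2 ^ (s + d)) ^ s := by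
      exact_mod_cast hprod
    rw [Nat.cast_mul]
    calc _ ≤ (((2 : ℝ) ^ (s + d)) ^ s) * ((2 ^ (s + d) - 2 ^ s : ℕ) : ℝ) := by gcongr
      _ = _ := by rw [hlast]; push_cast; ring

theorem rank_bound_tightness (r : ℕ) (hr : 1 ≤ r) (ε : ℝ) (hε0 : 0 < ε) (hε1 : ε < 1) :
    genProbZ (Fin r → Multiplicative (ZMod 2)) ((r : ℤ) + ⌈Real.logb 2 (2 / ε)⌉ - 3) <
      1 - ε := by
  obtain ⟨s, rfl⟩ : ∃ s, r = s + 1 := ⟨r - 1, by omega⟩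
  have hlog : 1 < Real.logb 2 (2 / ε) := by
    rw [Real.lt_logb_iff_rpow_lt one_lt_two (by positivity), Real.rpow_one, lt_div_iff₀ hε0]
    linarith
  have hceil : 1 < ⌈Real.logb 2 (2 / ε)⌉ := Int.lt_ceil.mpr (by exact_mod_cast hlog)
  obtain ⟨d, hd⟩ : ∃ d : ℕ, ⌈Real.logb 2 (2 / ε)⌉ = d + 2 :=
    ⟨(⌈Real.logb 2 (2 / ε)⌉ - 2).toNat, by omega⟩
  have hεd : ε < ((2 : ℝ) ^ d)⁻¹ := by
    have h : ((d + 1 : ℕ) : ℝ) < Real.logb 2 (2 / ε) := by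
      have : ((d + 1 : ℕ) : ℤ) < ⌈Real.logb 2 (2 / ε)⌉ := by omega
      exact_mod_cast Int.lt_ceil.mp this
    rw [Real.lt_logb_iff_rpow_lt one_lt_two (by positivity), Real.rpow_natCast,
      lt_div_iff₀ hε0, pow_succ] at h
    rw [← one_div, lt_div_iff₀ (by positivity)]
    linarith
  have hk : ((s + 1 : ℕ) : ℤ) + ⌈Real.logb 2 (2 / ε)⌉ - 3 = ((s + d : ℕ) : ℤ) := by
    rw [hd]; push_cast; ring
  rw [hk, genProbZ, if_pos (Int.natCast_nonneg _), Int.toNat_natCast]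
  exact (genProb_le s d).trans_lt (by linarith)
end

section
/- Let G be a finite abelian group. Then rank(G) + 2 independently and uniformly chosen random elements of G generate G with probability at least 1/2; that is, φ_{rank(G)+2}(G) ≥ 1/2. -/
/-- The sum of the inverse squares of the primes below an odd bound, with an explicit tail. -/
lemma sum_prime_inv_sq_range_odd_le (m : ℕ) :
    ∑ p ∈ (Finset.range (2 * m + 3)).filter Nat.Prime, 1 / (p : ℝ) ^ 2
      ≤ 1 / 2 - 1 / (4 * ((m : ℝ) + 1)) := by
  simp only [Finset.sum_filter]
  induction m with
  | zero =>
    norm_num [Finset.sum_range_succ, Nat.prime_two]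
  | succ m ih =>
    have hnp : ¬ Nat.Prime (2 * m + 4) := by
      intro h
      have := h.eq_one_or_self_of_dvd 2 ⟨m + 2, by ring⟩
      omega
    rw [show 2 * (m + 1) + 3 = 2 * m + 3 + 1 + 1 by ring, Finset.sum_range_succ,
      Finset.sum_range_succ, if_neg hnp, add_zero]
    have hterm : (if Nat.Prime (2 * m + 3) then 1 / ((2 * m + 3 : ℕ) : ℝ) ^ 2 else 0)
        ≤ 1 / (2 * (m : ℝ) + 3) ^ 2 := by
      split_ifs
      · push_cast; exact le_rfl
      · positivity
    have htel : 1 / (2 * (m : ℝ) + 3) ^ 2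
        ≤ 1 / (4 * ((m : ℝ) + 1)) - 1 / (4 * ((m : ℝ) + 1 + 1)) := by
      rw [show 1 / (4 * ((m : ℝ) + 1)) - 1 / (4 * ((m : ℝ) + 1 + 1))
        = 1 / (4 * ((m : ℝ) + 1) * (m + 2)) by field_simp; ring]
      apply one_div_le_one_div_of_le (by positivity)
      nlinarith
    push_cast at *
    linarith

lemma sum_prime_inv_sq_le_half (n : ℕ) :
    ∑ p ∈ (Finset.range n).filter Nat.Prime, 1 / (p : ℝ) ^ 2 ≤ 1 / 2 := by
  refine (Finset.sum_le_sum_of_subset_of_nonneg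
    (t := (Finset.range (2 * n + 3)).filter Nat.Prime) ?_ fun _ _ _ => by positivity).trans
    ((sum_prime_inv_sq_range_odd_le n).trans (sub_le_self _ (by positivity)))
  exact Finset.filter_subset_filter _ (Finset.range_mono (by omega))

/-- A proper subgroup of a finite abelian group is killed by a surjection onto a cyclic group of
prime order. -/
lemma Subgroup.exists_surjective_zmod_prime_le_ker {G : Type*} [CommGroup G] [Finite G]
    {H : Subgroup G} (hH : H ≠ ⊤) :
    ∃ p : ℕ, p.Prime ∧ ∃ f : G →* Multiplicative (ZMod p),
      Function.Surjective f ∧ H ≤ f.ker := by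
  obtain ⟨M, hM, hHM⟩ := (eq_top_or_exists_le_coatom H).resolve_left hH
  have : IsSimpleOrder (Set.Ici M) := Set.isSimpleOrder_Ici_iff_isCoatom.2 hM
  have : IsSimpleOrder (Subgroup (G ⧸ M)) :=
    OrderIso.isSimpleOrder (β := Set.Ici M) (QuotientGroup.comapMk'OrderIso M)
  have : Nontrivial (G ⧸ M) := Subgroup.nontrivial_iff.1 inferInstance
  have : IsSimpleGroup (G ⧸ M) := ⟨fun K _ => eq_bot_or_eq_top K⟩
  have hp : (Nat.card (G ⧸ M)).Prime := IsSimpleGroup.prime_card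
  have := Fact.mk hp
  let e : G ⧸ M ≃* Multiplicative (ZMod (Nat.card (G ⧸ M))) :=
    mulEquivOfPrimeCardEq rfl (Nat.card_zmod _)
  refine ⟨_, hp, e.toMonoidHom.comp (QuotientGroup.mk' M),
    e.surjective.comp (QuotientGroup.mk'_surjective M), hHM.trans fun x hx => ?_⟩
  simpa [MonoidHom.mem_ker] using hx

lemma MonoidHom.card_le_card_pow_rank (G A : Type*) [Group G] [Finite G] [Monoid A] [Finite A] :
    Nat.card (G →* A) ≤ Nat.card A ^ Group.rank G := by
  obtain ⟨S, hS, hgen⟩ := Group.rank_spec G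
  have hinj : Function.Injective fun (f : G →* A) (s : S) => f s := fun f g hfg =>
    MonoidHom.eq_of_eqOn_dense hgen fun s hs => congrFun hfg ⟨s, hs⟩
  simpa [Nat.card_fun, hS] using Nat.card_le_card_of_injective _ hinj

lemma MonoidHom.card_pi_ker_of_surjective {G A : Type*} [Group G] [Finite G] [Group A] [Finite A]
    {f : G →* A} (hf : Function.Surjective f) (k : ℕ) :
    (Nat.card {v : Fin k → G // ∀ i, v i ∈ f.ker} : ℝ)
      = (Nat.card G : ℝ) ^ k / (Nat.card A : ℝ) ^ k := by
  have hcard : Nat.card f.ker * Nat.card A = Nat.card G := by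
    rw [← f.ker.card_mul_index, Subgroup.index_ker, MonoidHom.range_eq_top.2 hf,
      Subgroup.card_top]
  have hA : (Nat.card A : ℝ) ≠ 0 := by exact_mod_cast Nat.card_pos.ne'
  rw [Nat.card_congr (Equiv.subtypePiEquivPi (p := fun _ x => x ∈ f.ker)), Nat.card_pi, ← hcard]
  simp only [Finset.prod_const, Finset.card_univ, Fintype.card_fin]
  push_cast
  rw [mul_pow, mul_div_cancel_right₀ _ (pow_ne_zero _ hA)]

/-- A union bound for the number of tuples which fail to generate. -/
lemma card_not_generating_le (G : Type*) [CommGroup G] [Finite G] :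
    (Nat.card {v : Fin (Group.rank G + 2) → G // Subgroup.closure (Set.range v) ≠ ⊤} : ℝ)
      ≤ (Nat.card G : ℝ) ^ (Group.rank G + 2) / 2 := by
  classical
  set k := Group.rank G + 2 with hk
  have := Fintype.ofFinite G
  have hfin (p : ℕ) (hp : p.Prime) : Finite (G →* Multiplicative (ZMod p)) :=
    have := Fact.mk hp
    Finite.of_injective _ DFunLike.coe_injective
  let P := (Finset.range (Nat.card G + 1)).filter Nat.Prime
  let homs (p : ℕ) : Set (G →* Multiplicative (ZMod p)) := {f | Function.Surjective f}
  let bad (p : ℕ) : Finset (Fin k → G) :=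
    Finset.univ.filter fun v => ∃ f ∈ homs p, ∀ i, v i ∈ f.ker
  have hsub : (Finset.univ.filter fun v : Fin k → G => Subgroup.closure (Set.range v) ≠ ⊤)
      ⊆ P.biUnion bad := by
    intro v hv
    obtain ⟨p, hp, f, hf, hle⟩ :=
      Subgroup.exists_surjective_zmod_prime_le_ker (Finset.mem_filter.1 hv).2
    have hpG : p ≤ Nat.card G := by
      exact (Nat.card_zmod p).symm.trans_le (Nat.card_le_card_of_surjective f hf)
    simp only [Finset.mem_biUnion, P, bad, Finset.mem_filter, Finset.mem_range, Finset.mem_univ,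
      true_and]
    exact ⟨p, ⟨by omega, hp⟩, f, hf, fun i => hle (Subgroup.subset_closure ⟨i, rfl⟩)⟩
  have hbad (p : ℕ) (hp : p ∈ P) :
      ((bad p).card : ℝ) ≤ (Nat.card G : ℝ) ^ k * (1 / (p : ℝ) ^ 2) := by
    have hp : p.Prime := (Finset.mem_filter.1 hp).2
    have := Fact.mk hp
    have := hfin p hp
    have := Fintype.ofFinite (G →* Multiplicative (ZMod p))
    have hcardA : Nat.card (Multiplicative (ZMod p)) = p := by simp
    have hp0 : (p : ℝ) ≠ 0 := by exact_mod_cast hp.ne_zero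
    have hunion : bad p ⊆ (Finset.univ.filter fun f => f ∈ homs p).biUnion
        fun f => Finset.univ.filter fun v : Fin k → G => ∀ i, v i ∈ f.ker := by
      intro v hv
      simpa [bad] using hv
    have hhoms : ((Finset.univ.filter fun f => f ∈ homs p).card : ℝ)
        ≤ (p : ℝ) ^ Group.rank G := by
      have h := MonoidHom.card_le_card_pow_rank G (Multiplicative (ZMod p))
      rw [hcardA, Nat.card_eq_fintype_card] at h
      exact_mod_cast (Finset.card_le_univ _).trans h
    calc ((bad p).card : ℝ)
        ≤ ∑ f ∈ Finset.univ.filter (fun f => f ∈ homs p),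
            ((Finset.univ.filter fun v : Fin k → G => ∀ i, v i ∈ f.ker).card : ℝ) := by
          exact_mod_cast (Finset.card_le_card hunion).trans Finset.card_biUnion_le
      _ = ∑ f ∈ Finset.univ.filter (fun f => f ∈ homs p),
            (Nat.card G : ℝ) ^ k / (p : ℝ) ^ k := by
          refine Finset.sum_congr rfl fun f hf => ?_
          have h := MonoidHom.card_pi_ker_of_surjective (Finset.mem_filter.1 hf).2 k
          rwa [hcardA, Nat.card_eq_fintype_card, Fintype.card_subtype] at h
      _ ≤ (p : ℝ) ^ Group.rank G * ((Nat.card G : ℝ) ^ k / (p : ℝ) ^ k) := by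
          rw [Finset.sum_const, nsmul_eq_mul]
          gcongr
      _ = (Nat.card G : ℝ) ^ k * (1 / (p : ℝ) ^ 2) := by
          rw [hk, pow_add (p : ℝ)]
          field_simp
  rw [Nat.card_eq_fintype_card, Fintype.card_subtype]
  calc ((Finset.univ.filter fun v : Fin k → G =>
          Subgroup.closure (Set.range v) ≠ ⊤).card : ℝ)
      ≤ ∑ p ∈ P, ((bad p).card : ℝ) := by
        exact_mod_cast (Finset.card_le_card hsub).trans Finset.card_biUnion_le
    _ ≤ ∑ p ∈ P, (Nat.card G : ℝ) ^ k * (1 / (p : ℝ) ^ 2) := Finset.sum_le_sum hbad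
    _ ≤ (Nat.card G : ℝ) ^ k * (1 / 2) := by
        rw [← Finset.mul_sum]
        gcongr
        exact sum_prime_inv_sq_le_half _
    _ = (Nat.card G : ℝ) ^ k / 2 := by ring

theorem abelian_genProb_rank_add_two (G : Type*) [CommGroup G] [Finite G] :
    (1 : ℝ) / 2 ≤ genProb G (Group.rank G + 2) := by
  classical
  have := Fintype.ofFinite G
  have hbad := card_not_generating_le G
  have hsum := Fintype.card_subtype_compl
    (fun v : Fin (Group.rank G + 2) → G => Subgroup.closure (Set.range v) = ⊤)
  have hle := Fintype.card_subtype_le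
    (fun v : Fin (Group.rank G + 2) → G => Subgroup.closure (Set.range v) = ⊤)
  have hG : (0 : ℝ) < (Nat.card G : ℝ) ^ (Group.rank G + 2) := by
    have : 0 < Nat.card G := Nat.card_pos
    positivity
  have htotal : Fintype.card (Fin (Group.rank G + 2) → G) = Nat.card G ^ (Group.rank G + 2) := by
    simp
  rw [Nat.card_eq_fintype_card (α := {v : Fin (Group.rank G + 2) → G // _}), hsum,
    Nat.cast_sub hle, htotal] at hbad
  rw [genProb, le_div_iff₀ hG, Nat.card_eq_fintype_card (α := {v // _})]
  push_cast at hbad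
  linarith
end

section
/- Let G be a finite abelian group, let H ≤ G be a subgroup, and let 0 < ε < 1 be real. If k is a natural number with k ≥ Ω(|G|) − Ω(|H|) + ⌈log₂(1/ε)⌉, then φ_k(G/H) ≥ 1 − ε. -/
open ArithmeticFunction in
theorem two_pow_cardFactors_le {n : ℕ} (hn : n ≠ 0) : 2 ^ cardFactors n ≤ n := by
  rw [cardFactors_apply]
  conv_rhs => rw [← Nat.prod_primeFactorsList hn]
  exact List.pow_card_le_prod _ _ fun p hp => (Nat.prime_of_mem_primeFactorsList hp).two_le

open ArithmeticFunction in
theorem Subgroup.cardFactors_index_lt_of_lt {G : Type*} [Group G] [Finite G] {K L : Subgroup G}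
    (h : K < L) : cardFactors L.index < cardFactors K.index := by
  have hrel : K.relIndex L ≠ 1 := fun h1 => h.not_ge (Subgroup.relIndex_eq_one.mp h1)
  have hrel0 : K.relIndex L ≠ 0 := Subgroup.index_ne_zero_of_finite
  rw [← Subgroup.relIndex_mul_index h.le,
    cardFactors_mul hrel0 Subgroup.index_ne_zero_of_finite]
  have : 0 < cardFactors (K.relIndex L) := by
    rw [Nat.pos_iff_ne_zero, ne_eq, cardFactors_eq_zero_iff_eq_zero_or_one]
    tauto
  omega

/-- The number of `k`-tuples which together with the subgroup `K` fail to generate `G`. -/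
noncomputable def nonGenCount {G : Type*} [Group G] (K : Subgroup G) (k : ℕ) : ℕ :=
  Nat.card {v : Fin k → G // K ⊔ Subgroup.closure (Set.range v) ≠ ⊤}

theorem nonGenCount_top {G : Type*} [Group G] (k : ℕ) :
    nonGenCount (⊤ : Subgroup G) k = 0 := by
  simp [nonGenCount]

theorem nonGenCount_succ {G : Type*} [Group G] [Fintype G] (K : Subgroup G) (k : ℕ) :
    nonGenCount K (k + 1) = ∑ g : G, nonGenCount (K ⊔ Subgroup.closure {g}) k := by
  simp only [nonGenCount]
  rw [← Nat.card_sigma]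
  refine Nat.card_congr (Equiv.trans ?_
    (Equiv.subtypeProdEquivSigmaSubtype fun (g : G) (v : Fin k → G) =>
      K ⊔ Subgroup.closure {g} ⊔ Subgroup.closure (Set.range v) ≠ ⊤))
  refine ((Fin.consEquiv fun _ => G).subtypeEquiv fun x => ?_).symm
  have hcons : Fin.consEquiv (fun _ => G) x = (Fin.cons x.1 x.2 : Fin (k + 1) → G) := rfl
  rw [hcons, Fin.range_cons, Set.insert_eq, Subgroup.closure_union, sup_assoc]

open ArithmeticFunction in
/-- The potential `2 ^ Ω(index) - 1` at least halves in expectation whenever a random element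
is adjoined. -/
theorem nonGenCount_mul_two_pow_le {G : Type*} [Group G] [Finite G] (k : ℕ) (K : Subgroup G) :
    (nonGenCount K k : ℝ) * 2 ^ k ≤
      (2 ^ cardFactors K.index - 1) * (Nat.card G : ℝ) ^ k := by
  classical
  have := Fintype.ofFinite G
  induction k generalizing K with
  | zero =>
    rcases eq_or_ne K ⊤ with rfl | hK
    · simp [nonGenCount_top]
    · have h := Subgroup.cardFactors_index_lt_of_lt hK.lt_top
      have hcard : nonGenCount K 0 ≤ 1 :=
        (Nat.card_le_card_of_injective _ Subtype.val_injective).trans (by simp)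
      have hpow : (2 : ℝ) ^ 1 ≤ 2 ^ cardFactors K.index :=
        pow_le_pow_right₀ one_le_two (by omega)
      have : (nonGenCount K 0 : ℝ) ≤ 1 := mod_cast hcard
      simp only [pow_zero, mul_one]
      linarith
  | succ k ih =>
    rcases eq_or_ne K ⊤ with rfl | hK
    · simp [nonGenCount_top]
    obtain ⟨n, hn⟩ : ∃ n, cardFactors K.index = n + 1 :=
      Nat.exists_eq_add_one.mpr
        (Nat.zero_le _ |>.trans_lt (Subgroup.cardFactors_index_lt_of_lt hK.lt_top))
    have hstep (g : G) : (nonGenCount (K ⊔ Subgroup.closure {g}) k : ℝ) * 2 ^ k ≤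
        ((2 ^ n - 1) + if g ∈ K then 2 ^ n else 0) * (Nat.card G : ℝ) ^ k := by
      refine (ih _).trans ?_
      gcongr
      split_ifs with hg
      · rw [sup_eq_left.mpr ((Subgroup.closure_le K).mpr (Set.singleton_subset_iff.mpr hg)), hn,
          pow_succ]
        linarith
      · have hlt : K < K ⊔ Subgroup.closure {g} := by
          refine left_lt_sup.mpr fun hle => hg (hle (Subgroup.mem_closure_singleton_self g))
        have := Subgroup.cardFactors_index_lt_of_lt hlt
        have : (2 : ℝ) ^ cardFactors (K ⊔ Subgroup.closure {g}).index ≤ 2 ^ n :=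
          pow_le_pow_right₀ one_le_two (by omega)
        linarith
    have hcard : (Nat.card K : ℝ) * 2 ^ (n + 1) ≤ Nat.card G := by
      rw [← K.card_mul_index, ← hn]
      exact_mod_cast Nat.mul_le_mul_left _
        (two_pow_cardFactors_le Subgroup.index_ne_zero_of_finite)
    have hsum : ∑ g : G, (((2 : ℝ) ^ n - 1) + if g ∈ K then 2 ^ n else 0) =
        Nat.card G * (2 ^ n - 1) + Nat.card K * 2 ^ n := by
      rw [Finset.sum_add_distrib, ← Finset.sum_filter]
      simp [Nat.card_eq_fintype_card, Fintype.card_subtype, mul_sub]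
    have htotal : (nonGenCount K (k + 1) : ℝ) * 2 ^ k ≤
        (Nat.card G * (2 ^ n - 1) + Nat.card K * 2 ^ n) * (Nat.card G : ℝ) ^ k := by
      rw [nonGenCount_succ, Nat.cast_sum, Finset.sum_mul, ← hsum, Finset.sum_mul]
      exact Finset.sum_le_sum fun g _ => hstep g
    calc (nonGenCount K (k + 1) : ℝ) * 2 ^ (k + 1)
        = 2 * ((nonGenCount K (k + 1) : ℝ) * 2 ^ k) := by ring
      _ ≤ 2 * ((Nat.card G * (2 ^ n - 1) + Nat.card K * 2 ^ n) * (Nat.card G : ℝ) ^ k) := by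
        gcongr
      _ = (2 * Nat.card G * (2 ^ n - 1) + Nat.card K * 2 ^ (n + 1)) * (Nat.card G : ℝ) ^ k := by
        ring
      _ ≤ (2 * Nat.card G * (2 ^ n - 1) + Nat.card G) * (Nat.card G : ℝ) ^ k := by gcongr
      _ = (2 ^ cardFactors K.index - 1) * (Nat.card G : ℝ) ^ (k + 1) := by rw [hn]; ring

theorem genProb_eq_one_sub {G : Type*} [Group G] [Finite G] (k : ℕ) :
    genProb G k = 1 - nonGenCount (⊥ : Subgroup G) k / (Nat.card G : ℝ) ^ k := by
  classical
  have hsplit : Nat.card {v : Fin k → G // Subgroup.closure (Set.range v) = ⊤} +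
      nonGenCount (⊥ : Subgroup G) k = Nat.card G ^ k := by
    simp only [nonGenCount, bot_sup_eq]
    rw [← Nat.card_sum, Nat.card_congr (Equiv.sumCompl _), Nat.card_fun, Nat.card_fin]
  have hpos : (Nat.card G : ℝ) ^ k ≠ 0 := pow_ne_zero _ (mod_cast Nat.card_pos.ne')
  rw [genProb, eq_sub_iff_add_eq, ← add_div, div_eq_one_iff_eq hpos]
  exact_mod_cast hsplit

open ArithmeticFunction in
theorem one_sub_two_pow_div_le_genProb (G : Type*) [Group G] [Finite G] (k : ℕ) :
    1 - (2 : ℝ) ^ cardFactors (Nat.card G) / 2 ^ k ≤ genProb G k := by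
  have hpos : 0 < (Nat.card G : ℝ) ^ k := pow_pos (mod_cast Nat.card_pos) _
  have h := nonGenCount_mul_two_pow_le k (⊥ : Subgroup G)
  rw [Subgroup.index_bot] at h
  rw [genProb_eq_one_sub]
  gcongr 1 - ?_
  rw [div_le_div_iff₀ hpos (by positivity)]
  nlinarith

theorem ahsp_len_bound (G : Type*) [CommGroup G] [Finite G] (H : Subgroup G)
    (ε : ℝ) (hε0 : 0 < ε) (hε1 : ε < 1) (k : ℕ)
    (hk : ((Nat.card G).primeFactorsList.length : ℤ) -
        ((Nat.card H).primeFactorsList.length : ℤ) + ⌈Real.logb 2 (1 / ε)⌉ ≤ (k : ℤ)) :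
    1 - ε ≤ genProb (G ⧸ H) k := by
  refine le_trans ?_ (one_sub_two_pow_div_le_genProb (G ⧸ H) k)
  set n := ArithmeticFunction.cardFactors (Nat.card (G ⧸ H)) with hn
  have hlen : (Nat.card G).primeFactorsList.length =
      n + (Nat.card H).primeFactorsList.length := by
    rw [hn, ← ArithmeticFunction.cardFactors_apply, ← ArithmeticFunction.cardFactors_apply,
      H.card_eq_card_quotient_mul_card_subgroup,
      ArithmeticFunction.cardFactors_mul Nat.card_pos.ne' Nat.card_pos.ne']
  have hceil : ⌈Real.logb 2 (1 / ε)⌉ ≤ (k : ℤ) - n := by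
    rw [hlen] at hk
    push_cast at hk
    linarith
  have hlog : Real.logb 2 (1 / ε) ≤ (k : ℝ) - n := by
    exact_mod_cast Int.ceil_le.mp hceil
  rw [Real.logb_le_iff_le_rpow one_lt_two (by positivity), Real.rpow_sub two_pos,
    Real.rpow_natCast, Real.rpow_natCast] at hlog
  gcongr 1 - ?_
  simpa using one_div_le_one_div_of_le (by positivity) hlog
end

section
/- Let G be a finite nilpotent group and let k be a natural number. Then φ_k(G) ≥ φ_k((ℤ/2ℤ)^{Ω(|G|)}); that is, among all finite nilpotent groups of composition length n = Ω(|G|), the elementary abelian 2-group (ℤ/2ℤ)^n is the hardest to generate by random elements. -/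
open ArithmeticFunction in
/-- The order of a strictly smaller subgroup has strictly fewer prime factors. -/
lemma Subgroup.cardFactors_card_lt {G : Type*} [Group G] [Finite G] {H K : Subgroup G}
    (h : H < K) : cardFactors (Nat.card H) < cardFactors (Nat.card K) := by
  obtain ⟨c, hc⟩ := Subgroup.card_dvd_of_le h.le
  have hK : Nat.card K ≠ 0 := Nat.card_pos.ne'
  have hc0 : c ≠ 0 := by
    rintro rfl
    exact hK (by simpa using hc)
  have hc1 : c ≠ 1 := by
    rintro rfl
    exact h.ne (Subgroup.eq_of_le_of_card_ge h.le (by rw [hc, mul_one]))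
  rw [hc, cardFactors_mul Nat.card_pos.ne' hc0]
  have : cardFactors c ≠ 0 := by
    simp [cardFactors_eq_zero_iff_eq_zero_or_one, hc0, hc1]
  omega

open ArithmeticFunction in
/-- A finite group `K` can be generated by at most `Ω(|K|)` elements. -/
lemma Subgroup.exists_finset_card_le_cardFactors {G : Type*} [Group G] [Finite G]
    (K : Subgroup G) :
    ∃ S : Finset G, S.card ≤ cardFactors (Nat.card K) ∧ Subgroup.closure (S : Set G) = K := by
  classical
  induction K using WellFoundedLT.induction with
  | ind K ih =>
    by_cases hK : K = ⊥
    · exact ⟨∅, by simp, by simp [hK]⟩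
    · obtain ⟨H, hH⟩ := exists_covBy_of_wellFoundedGT (by simpa using hK : ¬ IsMin K)
      obtain ⟨S, hS, hSH⟩ := ih H hH.lt
      obtain ⟨x, hxK, hxH⟩ := SetLike.exists_of_lt hH.lt
      refine ⟨insert x S, ?_, ?_⟩
      · have := Subgroup.cardFactors_card_lt hH.lt
        have := Finset.card_insert_le x S
        omega
      · have hle : H ≤ Subgroup.closure ((insert x S : Finset G) : Set G) := by
          rw [← hSH]
          exact Subgroup.closure_mono (by simp)
        have hmem : x ∈ Subgroup.closure ((insert x S : Finset G) : Set G) :=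
          Subgroup.subset_closure (by simp)
        refine (hH.eq_or_eq hle ?_).resolve_left fun h => hxH (h ▸ hmem)
        rw [Subgroup.closure_le, Finset.coe_insert, Set.insert_subset_iff]
        exact ⟨hxK, fun y hy => hH.le (hSH ▸ Subgroup.subset_closure hy)⟩

/-- The number of lifts of a family in `G ⧸ N` to `G`. -/
lemma QuotientGroup.card_lifts {G : Type*} [Group G] (N : Subgroup G)
    {ι : Type*} [Finite ι] (w : ι → G ⧸ N) :
    Nat.card {v : ι → G // ∀ i, (v i : G ⧸ N) = w i} = Nat.card N ^ Nat.card ι := by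
  have := Fintype.ofFinite ι
  rw [Nat.card_congr (Equiv.subtypePiEquivPi (p := fun i (g : G) => (g : G ⧸ N) = w i)),
    Nat.card_pi]
  have h (i : ι) : Nat.card {g : G // (g : G ⧸ N) = w i} = Nat.card N := by
    have h := QuotientGroup.card_preimage_mk N {w i}
    rw [Nat.card_unique (α := ({w i} : Set (G ⧸ N))), mul_one] at h
    exact h
  simp [h]

/-- A lift of a generating family of `G ⧸ N` generates a subgroup mapping onto `G ⧸ N`. -/
lemma QuotientGroup.exists_mem_closure_of_lift {G : Type*} [Group G] {N : Subgroup G} [N.Normal]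
    {ι : Type*} {v : ι → G} {w : ι → G ⧸ N} (hv : ∀ i, (v i : G ⧸ N) = w i)
    (hw : Subgroup.closure (Set.range w) = ⊤) (x : G ⧸ N) :
    ∃ g ∈ Subgroup.closure (Set.range v), (g : G ⧸ N) = x := by
  have hmap : (Subgroup.closure (Set.range v)).map (QuotientGroup.mk' N) = ⊤ := by
    rw [MonoidHom.map_closure, ← Set.range_comp, ← hw]
    congr 2
    exact funext hv
  exact Subgroup.mem_map.1 (hmap ▸ Subgroup.mem_top x)

/-- If `N` has prime order, a proper subgroup mapping onto `G ⧸ N` maps injectively. -/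
lemma QuotientGroup.mk_injOn_of_ne_top {G : Type*} [Group G] [Finite G] {N : Subgroup G}
    (hN : (Nat.card N).Prime) {H : Subgroup G} (hH : H ≠ ⊤)
    (hsurj : ∀ x : G ⧸ N, ∃ g ∈ H, (g : G ⧸ N) = x) {x y : G} (hx : x ∈ H) (hy : y ∈ H)
    (hxy : (x : G ⧸ N) = y) : x = y := by
  have hNH : ¬ N ≤ H := by
    refine fun hle => hH (eq_top_iff.2 fun g _ => ?_)
    obtain ⟨h, hh, hhg⟩ := hsurj g
    simpa using H.mul_mem hh (hle (QuotientGroup.eq.1 hhg))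
  have : Fact (Nat.card N).Prime := ⟨hN⟩
  have hbot : H.subgroupOf N = ⊥ :=
    ((H.subgroupOf N).eq_bot_or_eq_top_of_prime_card).resolve_right
      fun h => hNH (Subgroup.subgroupOf_eq_top.1 h)
  have hmem : x⁻¹ * y ∈ N := QuotientGroup.eq.1 hxy
  have h1 := (Subgroup.disjoint_def.1 (Subgroup.subgroupOf_eq_bot.1 hbot))
    (H.mul_mem (H.inv_mem hx) hy) hmem
  exact inv_mul_eq_one.1 h1

/-- Let `N` be a normal subgroup of prime order. A generating family of `G ⧸ N` has at most
`|N| ^ d` lifts to `G` that do not generate `G`, when `G ⧸ N` is generated by `d` elements. -/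
lemma QuotientGroup.card_nongenerating_lifts_le {G : Type*} [Group G] [Finite G]
    (N : Subgroup G) [N.Normal] (hN : (Nat.card N).Prime) {ι κ : Type*} [Finite κ]
    (w : ι → G ⧸ N) (hw : Subgroup.closure (Set.range w) = ⊤)
    (q : κ → G ⧸ N) (hq : Subgroup.closure (Set.range q) = ⊤) :
    Nat.card {v : ι → G // (∀ i, (v i : G ⧸ N) = w i) ∧ Subgroup.closure (Set.range v) ≠ ⊤} ≤
      Nat.card N ^ Nat.card κ := by
  rw [← QuotientGroup.card_lifts N q]
  have hex (v : {v : ι → G // (∀ i, (v i : G ⧸ N) = w i) ∧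
      Subgroup.closure (Set.range v) ≠ ⊤}) (j : κ) :
      ∃ g ∈ Subgroup.closure (Set.range v.1), (g : G ⧸ N) = q j :=
    QuotientGroup.exists_mem_closure_of_lift v.2.1 hw (q j)
  choose F hF hFq using hex
  have hclosure (v) : Subgroup.closure (Set.range (F v)) = Subgroup.closure (Set.range v.1) := by
    have hle : Subgroup.closure (Set.range (F v)) ≤ Subgroup.closure (Set.range v.1) := by
      rw [Subgroup.closure_le]
      rintro _ ⟨j, rfl⟩
      exact hF v j
    refine le_antisymm hle fun x hx => ?_
    obtain ⟨g, hg, hgx⟩ := QuotientGroup.exists_mem_closure_of_lift (hFq v) hq x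
    rwa [← QuotientGroup.mk_injOn_of_ne_top hN v.2.2
      (QuotientGroup.exists_mem_closure_of_lift v.2.1 hw) (hle hg) hx hgx]
  refine Nat.card_le_card_of_injective (fun v => ⟨F v, hFq v⟩) fun v v' hvv' => ?_
  have hFv : F v = F v' := congrArg Subtype.val hvv'
  have hcl : Subgroup.closure (Set.range v.1) = Subgroup.closure (Set.range v'.1) := by
    rw [← hclosure, ← hclosure, hFv]
  refine Subtype.ext (funext fun i => ?_)
  refine QuotientGroup.mk_injOn_of_ne_top hN v.2.2
    (QuotientGroup.exists_mem_closure_of_lift v.2.1 hw)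
    (Subgroup.subset_closure ⟨i, rfl⟩) ?_ ((v.2.1 i).trans (v'.2.1 i).symm)
  rw [hcl]
  exact Subgroup.subset_closure ⟨i, rfl⟩

/-- The number of generating `k`-tuples of `G` is at least `|N| ^ k - |N| ^ Ω(|G ⧸ N|)` times
that of `G ⧸ N`, when `N` is a normal subgroup of prime order. -/
lemma QuotientGroup.card_generating_mul_le {G : Type*} [Group G] [Finite G]
    (N : Subgroup G) [N.Normal] (hN : (Nat.card N).Prime) (k : ℕ) :
    Nat.card {w : Fin k → G ⧸ N // Subgroup.closure (Set.range w) = ⊤} *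
        (Nat.card N ^ k - Nat.card N ^ ArithmeticFunction.cardFactors (Nat.card (G ⧸ N))) ≤
      Nat.card {v : Fin k → G // Subgroup.closure (Set.range v) = ⊤} := by
  classical
  let f : {v : Fin k → G // Subgroup.closure (Set.range v) = ⊤} →
      {w : Fin k → G ⧸ N // Subgroup.closure (Set.range w) = ⊤} := fun v =>
    ⟨fun i => (v.1 i : G ⧸ N), by
      have h := MonoidHom.map_closure (QuotientGroup.mk' N) (Set.range v.1)
      rw [v.2, ← Set.range_comp,
        Subgroup.map_top_of_surjective _ (QuotientGroup.mk'_surjective N)] at h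
      exact h.symm⟩
  have := Fintype.ofFinite {w : Fin k → G ⧸ N // Subgroup.closure (Set.range w) = ⊤}
  rw [← Nat.card_congr (Equiv.sigmaFiberEquiv f), Nat.card_sigma, Nat.card_eq_fintype_card,
    ← smul_eq_mul, ← Finset.card_univ]
  refine Finset.card_nsmul_le_sum _ _ _ fun w _ => ?_
  obtain ⟨S, hS, hgen⟩ := Subgroup.exists_finset_card_le_cardFactors (⊤ : Subgroup (G ⧸ N))
  rw [Subgroup.card_top] at hS
  have hbad := QuotientGroup.card_nongenerating_lifts_le N hN w.1 w.2
    (fun s : S => (s : G ⧸ N)) (by simpa using hgen)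
  have hbad' := hbad.trans (Nat.pow_le_pow_right hN.pos
    (by simpa using hS : Nat.card S ≤ ArithmeticFunction.cardFactors (Nat.card (G ⧸ N))))
  have hall := QuotientGroup.card_lifts N w.1
  rw [Nat.card_fin] at hall
  have hsplit : Nat.card {v : Fin k → G // ∀ i, (v i : G ⧸ N) = w.1 i} ≤
      Nat.card {v // f v = w} + Nat.card {v : Fin k → G //
        (∀ i, (v i : G ⧸ N) = w.1 i) ∧ Subgroup.closure (Set.range v) ≠ ⊤} := by
    rw [← Nat.card_sum]
    refine Nat.card_le_card_of_injective (fun v =>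
      if h : Subgroup.closure (Set.range v.1) = ⊤ then
        Sum.inl ⟨⟨v.1, h⟩, Subtype.ext (funext v.2)⟩
      else Sum.inr ⟨v.1, v.2, h⟩) fun v v' hvv' => Subtype.ext ?_
    dsimp only at hvv'
    split_ifs at hvv' <;> simpa using hvv'
  omega

/-- The rows of a matrix whose columns generate `(ℤ/pℤ)^n` are linearly independent. -/
lemma linearIndependent_of_closure_range_eq_top {p n k : ℕ}
    (v : Fin k → Fin n → Multiplicative (ZMod p)) (hv : Subgroup.closure (Set.range v) = ⊤) :
    LinearIndependent (ZMod p) fun (i : Fin n) (j : Fin k) => (v j i).toAdd := by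
  rw [Fintype.linearIndependent_iff]
  intro c hc i
  let φ : (Fin n → Multiplicative (ZMod p)) →* Multiplicative (ZMod p) :=
    { toFun := fun x => Multiplicative.ofAdd (∑ i, c i * (x i).toAdd)
      map_one' := by simp
      map_mul' := fun x y => by simp [mul_add, Finset.sum_add_distrib] }
  have hker : φ.ker = ⊤ := by
    rw [eq_top_iff, ← hv, Subgroup.closure_le]
    rintro _ ⟨j, rfl⟩
    have := congrFun hc j
    simp only [Finset.sum_apply, Pi.smul_apply, smul_eq_mul, Pi.zero_apply] at this
    exact MonoidHom.mem_ker.2 (congrArg Multiplicative.ofAdd this)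
  have h : φ (Pi.mulSingle i (Multiplicative.ofAdd 1)) = 1 :=
    MonoidHom.mem_ker.1 (hker ▸ Subgroup.mem_top _)
  simpa [φ, Pi.mulSingle_apply, apply_ite] using h

/-- Upper bound for the probability of generating `(ℤ/2ℤ)^n`. -/
lemma genProb_elementary_abelian_two_le (n k : ℕ) :
    genProb (Fin n → Multiplicative (ZMod 2)) k ≤
      ∏ i ∈ Finset.range n, (1 - (2 : ℝ) ^ i / 2 ^ k) := by
  have hle : Nat.card {v : Fin k → Fin n → Multiplicative (ZMod 2) //
      Subgroup.closure (Set.range v) = ⊤} ≤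
      Nat.card {s : Fin n → Fin k → ZMod 2 // LinearIndependent (ZMod 2) s} := by
    refine Nat.card_le_card_of_injective
      (fun v => ⟨_, linearIndependent_of_closure_range_eq_top v.1 v.2⟩) fun v v' h => ?_
    refine Subtype.ext (funext fun j => funext fun i => ?_)
    exact congrFun (congrFun (congrArg Subtype.val h) i) j
  rcases le_or_gt n k with hnk | hkn
  · rw [card_linearIndependent (by simpa using hnk)] at hle
    have hcast : ((∏ i : Fin n, (Fintype.card (ZMod 2) ^ Module.finrank (ZMod 2) (Fin k → ZMod 2)
        - Fintype.card (ZMod 2) ^ (i : ℕ)) : ℕ) : ℝ) =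
        (∏ i ∈ Finset.range n, (1 - (2 : ℝ) ^ i / 2 ^ k)) * (2 ^ k) ^ n := by
      rw [Finset.prod_range, Nat.cast_prod]
      have hpow : ((2 : ℝ) ^ k) ^ n = ∏ _i : Fin n, (2 : ℝ) ^ k := by simp
      rw [hpow, ← Finset.prod_mul_distrib]
      refine Finset.prod_congr rfl fun i _ => ?_
      rw [ZMod.card, Module.finrank_fin_fun,
        Nat.cast_sub (Nat.pow_le_pow_right two_pos (i.2.le.trans hnk))]
      push_cast
      field_simp
    rw [genProb, div_le_iff₀ (pow_pos (Nat.cast_pos.2 Nat.card_pos) k)]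
    calc _ ≤ _ := Nat.cast_le.2 hle
      _ = _ := hcast
      _ = _ := by simp [← pow_mul, mul_comm]
  · have hempty : IsEmpty {s : Fin n → Fin k → ZMod 2 // LinearIndependent (ZMod 2) s} := by
      refine ⟨fun s => ?_⟩
      have := s.2.fintype_card_le_finrank
      simp at this
      omega
    rw [Nat.card_of_isEmpty (α := {s : Fin n → Fin k → ZMod 2 // LinearIndependent (ZMod 2) s}),
      Nat.le_zero] at hle
    rw [genProb, hle, Finset.prod_eq_zero (Finset.mem_range.2 hkn) (by simp)]
    simp

/-- A nontrivial finite nilpotent group has a normal subgroup of prime order. -/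
lemma Group.IsNilpotent.exists_normal_prime_card (G : Type*) [Group G] [Finite G] [Nontrivial G]
    [Group.IsNilpotent G] : ∃ N : Subgroup G, N.Normal ∧ (Nat.card N).Prime := by
  have hcard : Nat.card (Subgroup.center G) ≠ 1 := fun h =>
    Group.IsNilpotent.center_ne_bot G (Subgroup.card_eq_one.1 h)
  obtain ⟨p, hp, hdvd⟩ := Nat.exists_prime_and_dvd hcard
  have : Fact p.Prime := ⟨hp⟩
  obtain ⟨z, hz⟩ := exists_prime_orderOf_dvd_card' p hdvd
  refine ⟨Subgroup.zpowers (z : G), ⟨fun x hx g => ?_⟩, ?_⟩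
  · have hxc : x ∈ Subgroup.center G := Subgroup.zpowers_le.2 z.2 hx
    rwa [Subgroup.mem_center_iff.1 hxc g, mul_inv_cancel_right]
  · rwa [Nat.card_zpowers, Subgroup.orderOf_coe, hz]

lemma genProb_nonneg (G : Type*) [Group G] (k : ℕ) : 0 ≤ genProb G k := by
  unfold genProb
  positivity

/-- Lower bound for the probability of generating a nilpotent group. -/
lemma prod_le_genProb_of_isNilpotent (G : Type*) [Group G] [Finite G]
    [Group.IsNilpotent G] (k : ℕ) :
    ∏ i ∈ Finset.range (ArithmeticFunction.cardFactors (Nat.card G)), (1 - (2 : ℝ) ^ i / 2 ^ k) ≤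
      genProb G k := by
  induction hn : Nat.card G using Nat.strong_induction_on generalizing G with
  | _ n ih =>
  subst hn
  rcases subsingleton_or_nontrivial G with hG | hG
  · have hall (v : Fin k → G) : Subgroup.closure (Set.range v) = ⊤ := Subsingleton.elim _ _
    simp [genProb, hall]
  obtain ⟨N, hnormal, hN⟩ := Group.IsNilpotent.exists_normal_prime_card G
  have hcard := N.card_eq_card_quotient_mul_card_subgroup
  have hlt : Nat.card (G ⧸ N) < Nat.card G := by
    rw [hcard]
    exact lt_mul_of_one_lt_right Nat.card_pos hN.one_lt
  have hQ := ih _ hlt (G ⧸ N) rfl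
  have hcount := QuotientGroup.card_generating_mul_le N hN k
  have hfactors : ArithmeticFunction.cardFactors (Nat.card G) =
      ArithmeticFunction.cardFactors (Nat.card (G ⧸ N)) + 1 := by
    rw [hcard, ArithmeticFunction.cardFactors_mul Nat.card_pos.ne' hN.ne_zero,
      ArithmeticFunction.cardFactors_apply_prime hN]
  rw [hfactors]
  generalize ArithmeticFunction.cardFactors (Nat.card (G ⧸ N)) = m at *
  rcases le_or_gt k m with hkm | hmk
  · rw [Finset.prod_eq_zero (Finset.mem_range.2 (Nat.lt_succ_of_le hkm)) (by simp)]
    exact genProb_nonneg G k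
  have hp2 : (2 : ℝ) ≤ Nat.card N := by exact_mod_cast hN.two_le
  have hp0 : (0 : ℝ) < Nat.card N := by linarith
  obtain ⟨d, rfl⟩ := Nat.exists_eq_add_of_lt hmk
  have hratio : 1 - (2 : ℝ) ^ m / 2 ^ (m + d + 1) ≤
      1 - (Nat.card N : ℝ) ^ m / (Nat.card N : ℝ) ^ (m + d + 1) := by
    have h (x : ℝ) (hx : 0 < x) : x ^ m / x ^ (m + d + 1) = (x ^ (d + 1))⁻¹ := by
      rw [add_assoc, pow_add]
      field_simp
    rw [h _ two_pos, h _ hp0]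
    gcongr
  have hnonneg : 0 ≤ 1 - (2 : ℝ) ^ m / 2 ^ (m + d + 1) := by
    rw [sub_nonneg]
    exact div_le_one_of_le₀ (pow_le_pow_right₀ one_le_two (by omega)) (by positivity)
  rw [Finset.prod_range_succ]
  refine (mul_le_mul hQ hratio hnonneg (genProb_nonneg _ _)).trans ?_
  have hcast := (Nat.cast_le (α := ℝ)).2 hcount
  rw [Nat.cast_mul, Nat.cast_sub (Nat.pow_le_pow_right hN.pos (by omega))] at hcast
  push_cast at hcast
  have hQ0 : (0 : ℝ) < Nat.card (G ⧸ N) := by exact_mod_cast Nat.card_pos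
  unfold genProb
  rw [hcard, Nat.cast_mul, mul_pow, one_sub_div (by positivity), div_mul_div_comm]
  gcongr

theorem genProb_ge_elementary_abelian_two (G : Type*) [Group G] [Finite G]
    [Group.IsNilpotent G] (k : ℕ) :
    genProb (Fin (Nat.card G).primeFactorsList.length → Multiplicative (ZMod 2)) k ≤
      genProb G k :=
  (genProb_elementary_abelian_two_le _ k).trans (prod_le_genProb_of_isNilpotent G k)
end

section
/- Let G be a finite nilpotent group with rank(G) = r, and let k be a natural number with k ≥ r. Then φ_k(G) ≥ 1 − ∑_{p | |G|} 1/(p^{k−r}(p − 1)), the sum ranging over the distinct prime divisors p of |G|. -/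
/-- A homomorphism out of a finitely generated group is determined by its values on a minimal
generating set. -/
theorem card_monoidHom_le_pow_rank (G H : Type*) [Group G] [Group.FG G] [Group H] [Finite H] :
    Nat.card (G →* H) ≤ Nat.card H ^ Group.rank G := by
  obtain ⟨S, hcard, hS⟩ := Group.rank_spec G
  have hinj : Function.Injective (fun (f : G →* H) (s : S) => f s) := by
    intro f g hfg
    exact MonoidHom.eq_of_eqOn_dense hS fun x hx => congrFun hfg ⟨x, hx⟩
  calc Nat.card (G →* H) ≤ Nat.card (S → H) := Nat.card_le_card_of_injective _ hinj
    _ = Nat.card H ^ Group.rank G := by simp [Nat.card_fun, hcard]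

theorem card_ker_mul_of_prime_card {G H : Type*} [Group G] [Group H]
    {p : ℕ} [Fact p.Prime] (hH : Nat.card H = p) {f : G →* H} (hf : f ≠ 1) :
    Nat.card f.ker * p = Nat.card G := by
  have hp : Fact (Nat.card H).Prime := hH ▸ inferInstance
  have hrange : f.range = ⊤ := by
    refine f.range.eq_bot_or_eq_top_of_prime_card.resolve_left fun h => hf ?_
    exact MonoidHom.range_eq_bot_iff.mp h
  rw [← f.ker.card_mul_index, Subgroup.index_ker, hrange, Subgroup.card_top, hH]

/-- A maximal subgroup of a finite nilpotent group is the kernel of a nontrivial homomorphism to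
a group of prime order. -/
theorem IsCoatom.exists_monoidHom_ker_eq {G : Type*} [Group G] [Finite G] [Group.IsNilpotent G]
    {M : Subgroup G} (hM : IsCoatom M) :
    ∃ p ∈ (Nat.card G).primeFactors, ∃ f : G →* Multiplicative (ZMod p), f ≠ 1 ∧ f.ker = M := by
  have hnormal : M.Normal :=
    Subgroup.NormalizerCondition.normal_of_coatom M Group.normalizerCondition_of_isNilpotent hM
  have hsimple : IsSimpleGroup (G ⧸ M) := by
    have : Nontrivial (G ⧸ M) := QuotientGroup.nontrivial_iff.mpr hM.1
    refine ⟨fun N _ => ?_⟩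
    have hle : M ≤ N.comap (QuotientGroup.mk' M) := QuotientGroup.le_comap_mk' M N
    have hsurj := QuotientGroup.mk'_surjective M
    rcases hle.eq_or_lt with h | h
    · left
      rw [← Subgroup.map_comap_eq_self_of_surjective hsurj N, ← h, QuotientGroup.map_mk'_self]
    · right
      rw [← Subgroup.map_comap_eq_self_of_surjective hsurj N, hM.2 _ h,
        Subgroup.map_top_of_surjective _ hsurj]
  have hprime : (Nat.card (G ⧸ M)).Prime := IsSimpleGroup.prime_card
  have : Fact (Nat.card (G ⧸ M)).Prime := ⟨hprime⟩
  let e : G ⧸ M ≃* Multiplicative (ZMod (Nat.card (G ⧸ M))) :=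
    mulEquivOfPrimeCardEq (p := Nat.card (G ⧸ M)) rfl (by simp)
  have hker : (e.toMonoidHom.comp (QuotientGroup.mk' M)).ker = M := by
    ext x
    simp
  refine ⟨_, Nat.mem_primeFactors.mpr ⟨hprime, M.card_quotient_dvd_card, Nat.card_pos.ne'⟩,
    _, fun h => hM.1 ?_, hker⟩
  rw [← hker, h, MonoidHom.ker_one]

/-- Double counting of pairs consisting of a tuple and a nontrivial homomorphism killing it. -/
theorem card_tuples_killed_mul_le (G H : Type*) [Group G] [Finite G] [CommGroup H]
    {p : ℕ} [Fact p.Prime] (hH : Nat.card H = p) (k : ℕ) :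
    Nat.card {v : Fin k → G // ∃ f : G →* H, f ≠ 1 ∧ ∀ i, f (v i) = 1} * (p - 1) * p ^ k ≤
      p ^ Group.rank G * Nat.card G ^ k := by
  have hp : p.Prime := Fact.out
  have : Finite H := Nat.finite_of_card_ne_zero (hH ▸ hp.ne_zero)
  have : Finite (G →* H) := Finite.of_injective _ DFunLike.coe_injective
  have : Fintype {f : G →* H // f ≠ 1} := Fintype.ofFinite _
  let B := {v : Fin k → G // ∃ f : G →* H, f ≠ 1 ∧ ∀ i, f (v i) = 1}
  choose F hF hFv using fun v : B => v.2
  have hpow : ∀ (v : B) (g : G), F v g ≠ 1 → orderOf (F v g) = p := fun v g hg =>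
    orderOf_eq_prime (hH ▸ pow_card_eq_one') hg
  have hne : ∀ v : B, ∃ g, F v g ≠ 1 := fun v => by
    by_contra! h
    exact hF v (MonoidHom.ext h)
  have hF' : ∀ (v : B) (m : Fin (p - 1)), F v ^ (m.1 + 1) ≠ 1 := by
    intro v m h
    obtain ⟨g, hg⟩ := hne v
    have hdvd : p ∣ m.1 + 1 := (hpow v g hg).symm.dvd.trans <|
      orderOf_dvd_of_pow_eq_one (by simpa using DFunLike.congr_fun h g)
    have := Nat.le_of_dvd (Nat.succ_pos _) hdvd
    omega
  let Φ : B × Fin (p - 1) → Σ f : {f : G →* H // f ≠ 1}, (Fin k → f.1.ker) := fun x =>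
    ⟨⟨F x.1 ^ (x.2.1 + 1), hF' x.1 x.2⟩,
      fun i => ⟨x.1.1 i, by simp [MonoidHom.mem_ker, hFv x.1 i]⟩⟩
  have hΦ : Function.Injective Φ := by
    rintro ⟨v, m⟩ ⟨w, n⟩ h
    have hv : v = w := Subtype.ext <|
      congrArg (fun y : Σ f : {f : G →* H // f ≠ 1}, (Fin k → f.1.ker) =>
        fun i => (y.2 i : G)) h
    subst hv
    have hf : F v ^ (m.1 + 1) = F v ^ (n.1 + 1) :=
      congrArg (fun y : Σ f : {f : G →* H // f ≠ 1}, (Fin k → f.1.ker) => y.1.1) h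
    obtain ⟨g, hg⟩ := hne v
    have hmn : m.1 + 1 = n.1 + 1 := by
      refine pow_injOn_Iio_orderOf (x := F v g) ?_ ?_ (by simpa using DFunLike.congr_fun hf g)
      · rw [hpow v g hg, Set.mem_Iio]; omega
      · rw [hpow v g hg, Set.mem_Iio]; omega
    exact Prod.ext rfl (Fin.ext (Nat.succ_injective hmn))
  calc Nat.card B * (p - 1) * p ^ k = Nat.card (B × Fin (p - 1)) * p ^ k := by
        rw [Nat.card_prod, Nat.card_fin]
    _ ≤ Nat.card (Σ f : {f : G →* H // f ≠ 1}, (Fin k → f.1.ker)) * p ^ k := by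
        gcongr
        exact Nat.card_le_card_of_injective Φ hΦ
    _ = ∑ f : {f : G →* H // f ≠ 1}, (Nat.card f.1.ker * p) ^ k := by
        rw [Nat.card_sigma, Finset.sum_mul]
        exact Finset.sum_congr rfl fun f _ => by rw [Nat.card_fun, Nat.card_fin, mul_pow]
    _ = Nat.card {f : G →* H // f ≠ 1} * Nat.card G ^ k := by
        rw [Finset.sum_congr rfl fun f _ => by rw [card_ker_mul_of_prime_card hH f.2],
          Finset.sum_const, Finset.card_univ, ← Nat.card_eq_fintype_card, smul_eq_mul]
    _ ≤ p ^ Group.rank G * Nat.card G ^ k := by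
        gcongr
        exact (Nat.card_le_card_of_injective _ Subtype.val_injective).trans
          (hH ▸ card_monoidHom_le_pow_rank G H)

/-- The probability that a random tuple is killed by a nontrivial homomorphism to `ℤ/pℤ`. -/
theorem card_tuples_killed_div_le (G : Type*) [Group G] [Finite G]
    {p : ℕ} (hp : p.Prime) {k : ℕ} (hk : Group.rank G ≤ k) :
    (Nat.card {v : Fin k → G //
        ∃ f : G →* Multiplicative (ZMod p), f ≠ 1 ∧ ∀ i, f (v i) = 1} : ℝ) / (Nat.card G : ℝ) ^ k ≤
      1 / ((p : ℝ) ^ (k - Group.rank G) * ((p : ℝ) - 1)) := by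
  have : Fact p.Prime := ⟨hp⟩
  have h := card_tuples_killed_mul_le G (Multiplicative (ZMod p)) (p := p) (by simp) k
  have hp0 : (0 : ℝ) < p := by exact_mod_cast hp.pos
  have hp1 : (0 : ℝ) < (p : ℝ) - 1 := sub_pos.mpr (by exact_mod_cast hp.one_lt)
  have hG : (0 : ℝ) < Nat.card G := by exact_mod_cast Nat.card_pos
  have hR := (Nat.cast_le (α := ℝ)).mpr h
  push_cast [Nat.cast_sub hp.one_le] at hR
  rw [div_le_div_iff₀ (by positivity) (by positivity), one_mul]
  refine le_of_mul_le_mul_left ?_ (pow_pos hp0 (Group.rank G))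
  refine le_trans (le_of_eq ?_) hR
  conv_rhs => rw [← Nat.add_sub_cancel' hk, pow_add]
  rw [Nat.add_sub_cancel' hk]
  ring

theorem genProb_nilpotent_sum_lower_bound (G : Type*) [Group G] [Finite G]
    [Group.IsNilpotent G] (r : ℕ) (hr : Group.rank G = r) (k : ℕ) (hk : r ≤ k) :
    1 - ∑ p ∈ (Nat.card G).primeFactors, 1 / ((p : ℝ) ^ (k - r) * ((p : ℝ) - 1)) ≤
      genProb G k := by
  subst hr
  let A : Set (Fin k → G) := {v | Subgroup.closure (Set.range v) = ⊤}
  let B : ℕ → Set (Fin k → G) := fun p =>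
    {v | ∃ f : G →* Multiplicative (ZMod p), f ≠ 1 ∧ ∀ i, f (v i) = 1}
  have hcover : Set.univ ⊆ A ∪ ⋃ p ∈ (Nat.card G).primeFactors, B p := by
    intro v _
    rcases eq_top_or_exists_le_coatom (Subgroup.closure (Set.range v)) with h | ⟨M, hM, hle⟩
    · exact Or.inl h
    · obtain ⟨p, hp, f, hf, hker⟩ := hM.exists_monoidHom_ker_eq
      refine Or.inr (Set.mem_iUnion₂.mpr ⟨p, hp, f, hf, fun i => ?_⟩)
      rw [← MonoidHom.mem_ker, hker]
      exact hle (Subgroup.subset_closure ⟨i, rfl⟩)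
  have hcard : Nat.card G ^ k ≤ A.ncard + ∑ p ∈ (Nat.card G).primeFactors, (B p).ncard := by
    calc Nat.card G ^ k = (Set.univ : Set (Fin k → G)).ncard := by
          rw [Set.ncard_univ, Nat.card_fun, Nat.card_fin]
      _ ≤ (A ∪ ⋃ p ∈ (Nat.card G).primeFactors, B p).ncard := Set.ncard_le_ncard hcover
      _ ≤ A.ncard + (⋃ p ∈ (Nat.card G).primeFactors, B p).ncard := Set.ncard_union_le _ _
      _ ≤ _ := by
          gcongr
          exact Finset.set_ncard_biUnion_le _ _
  have hG : (0 : ℝ) < (Nat.card G : ℝ) ^ k := pow_pos (by exact_mod_cast Nat.card_pos) k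
  have hsum : ∑ p ∈ (Nat.card G).primeFactors, ((B p).ncard : ℝ) / (Nat.card G : ℝ) ^ k ≤
      ∑ p ∈ (Nat.card G).primeFactors,
        1 / ((p : ℝ) ^ (k - Group.rank G) * ((p : ℝ) - 1)) :=
    Finset.sum_le_sum fun p hp =>
      card_tuples_killed_div_le G (Nat.prime_of_mem_primeFactors hp) hk
  have hone : 1 ≤ genProb G k +
      ∑ p ∈ (Nat.card G).primeFactors, ((B p).ncard : ℝ) / (Nat.card G : ℝ) ^ k := by
    change 1 ≤ (A.ncard : ℝ) / (Nat.card G : ℝ) ^ k + _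
    rw [← Finset.sum_div, ← add_div, one_le_div hG]
    exact_mod_cast hcard
  linarith
end
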